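/- For integers 0 < a < b ≤ d, the following identity holds in the ring of formal power series ℤ[[q]]: (1 − 2q + q² − q^d) · ∑_{n≥1} ℓ_d^{(a,b)}(n) qⁿ = q^a − q^{a+1} + q^b. -/

import Mathlib

open Multiset Finset Filter

/-- A partition is encoded as a nonempty multiset of positive integers (its parts). -/
def IsPartition (M : Multiset ℕ) : Prop := M ≠ 0 ∧ ∀ x ∈ M, 0 < x

/-- The perimeter of a partition: (largest part) + (number of parts) - 1. -/
def perim (M : Multiset ℕ) : ℕ := M.sup + Multiset.card M - 1

/-- `rP n P` counts the partitions (of any sum) with perimeter `n` satisfying `P`. -/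
noncomputable def rP (n : ℕ) (P : Multiset ℕ → Prop) : ℕ :=
  Set.ncard {M : Multiset ℕ | IsPartition M ∧ perim M = n ∧ P M}

/-- `ellP d a b n`: partitions of perimeter n with every part ≡ a or ≡ b (mod d). -/
noncomputable def ellP (d a b n : ℕ) : ℕ :=
  rP n (fun M => ∀ x ∈ M, x % d = a % d ∨ x % d = b % d)

theorem card_finset_sym_aux (T : Finset ℕ) (k : ℕ) : (T.sym k).card = Nat.multichoose T.card k := by
  have h : T = (Finset.univ : Finset T).map (Function.Embedding.subtype _) := by
    ext x; simp
  conv_lhs => rw [h]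
  rw [Finset.sym_map, Finset.card_map, Finset.sym_univ, Finset.card_univ,
    Sym.card_sym_eq_multichoose, Fintype.card_coe]

/-- allowed parts -/
def Allow (d a b m : ℕ) : Prop := 0 < m ∧ (m % d = a % d ∨ m % d = b % d)

instance (d a b m : ℕ) : Decidable (Allow d a b m) := by unfold Allow; infer_instance

/-- allowed parts up to `m` -/
def allowUpTo (d a b m : ℕ) : Finset ℕ := (Finset.range (m + 1)).filter (Allow d a b)

theorem sup_mem_aux (M : Multiset ℕ) (h : M ≠ 0) : M.sup ∈ M := by
  induction M using Multiset.induction_on with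
  | empty => exact absurd rfl h
  | cons x s ih =>
    rw [Multiset.sup_cons]
    by_cases hs : s = 0
    · subst hs; simp
    · rcases le_total x s.sup with h1 | h1
      · rw [sup_eq_right.2 h1]; exact Multiset.mem_cons_of_mem (ih hs)
      · rw [sup_eq_left.2 h1]; exact Multiset.mem_cons_self _ _

theorem ellP_eq (d a b n : ℕ) :
    ellP d a b n = ∑ m ∈ Finset.range (n + 1),
      if Allow d a b m then Nat.multichoose (allowUpTo d a b m).card (n - m) else 0 := by
  classical
  rw [← Finset.sum_filter]
  have hset : {M : Multiset ℕ | IsPartition M ∧ perim M = n ∧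
      ∀ x ∈ M, x % d = a % d ∨ x % d = b % d} =
      (((Finset.range (n + 1)).filter (Allow d a b)).biUnion fun m =>
        ((allowUpTo d a b m).sym (n - m)).image fun s : Sym ℕ (n - m) => m ::ₘ (s : Multiset ℕ) :
          Finset (Multiset ℕ)) := by
    ext M
    simp only [Set.mem_ofPred_eq, Finset.coe_biUnion, Set.mem_iUnion, Finset.mem_coe,
      Finset.mem_image, Finset.mem_filter, Finset.mem_range, exists_prop, Finset.mem_sym_iff]
    constructor
    · rintro ⟨⟨h0, hpos⟩, hper, hall⟩
      have hm := sup_mem_aux M h0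
      have hp := hpos _ hm
      obtain ⟨N, hN⟩ := Multiset.exists_cons_of_mem hm
      have hc : Multiset.card M = Multiset.card N + 1 := by
        conv_lhs => rw [hN]
        simp
      unfold perim at hper
      refine ⟨M.sup, ⟨by omega, hp, hall _ hm⟩, ⟨N, by omega⟩, ?_, hN.symm⟩
      intro x hx
      have hx' : x ∈ N := hx
      have hxM : x ∈ M := by rw [hN]; exact Multiset.mem_cons_of_mem hx'
      have := Multiset.le_sup hxM
      simp only [allowUpTo, Finset.mem_filter, Finset.mem_range]
      exact ⟨by omega, hpos _ hxM, hall _ hxM⟩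
    · rintro ⟨m, ⟨hmn, hA⟩, ⟨N, hc⟩, hN, rfl⟩
      have hN' : ∀ x ∈ N, x < m + 1 ∧ Allow d a b x := by
        intro x hx
        have := hN x hx
        simpa [allowUpTo] using this
      have hs : N.sup ≤ m := Multiset.sup_le.2 fun x hx => by have := (hN' x hx).1; omega
      refine ⟨⟨Multiset.cons_ne_zero, ?_⟩, ?_, ?_⟩
      · intro x hx
        rcases Multiset.mem_cons.1 hx with rfl | hx
        · exact hA.1
        · exact (hN' x hx).2.1
      · change (m ::ₘ N).sup + Multiset.card (m ::ₘ N) - 1 = n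
        rw [Multiset.sup_cons, sup_eq_left.2 hs, Multiset.card_cons]
        omega
      · intro x hx
        rcases Multiset.mem_cons.1 hx with rfl | hx
        · exact hA.2
        · exact (hN' x hx).2.2
  unfold ellP rP
  rw [hset, Set.ncard_coe_finset, Finset.card_biUnion]
  · refine Finset.sum_congr rfl fun m _ => ?_
    rw [Finset.card_image_of_injective, card_finset_sym_aux]
    intro s t hst
    exact Subtype.ext ((Multiset.cons_inj_right m).1 hst)
  · intro m _ m' _ hne
    rw [Function.onFun, Finset.disjoint_left]
    intro M hM hM'
    apply hne
    have key : ∀ k, M ∈ ((allowUpTo d a b k).sym (n - k)).image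
        (fun s : Sym ℕ (n - k) => k ::ₘ (s : Multiset ℕ)) → M.sup = k := by
      intro k hk
      obtain ⟨s, hs, rfl⟩ := Finset.mem_image.1 hk
      rw [Multiset.sup_cons]
      refine sup_eq_left.2 (Multiset.sup_le.2 fun x hx => ?_)
      have := Finset.mem_sym_iff.1 hs x hx
      simp only [allowUpTo, Finset.mem_filter, Finset.mem_range] at this
      omega
    rw [← key m hM, ← key m' hM']

/-- generating function of multichoose -/
noncomputable def mcSeries (j : ℕ) : PowerSeries ℤ :=
  PowerSeries.mk fun k => (Nat.multichoose j k : ℤ)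

theorem mcSeries_zero : mcSeries 0 = 1 := by
  ext k
  cases k with
  | zero => simp [mcSeries]
  | succ k => simp [mcSeries, PowerSeries.coeff_one]

theorem mcSeries_succ (j : ℕ) : (1 - PowerSeries.X) * mcSeries (j + 1) = mcSeries j := by
  ext k
  rw [sub_mul, one_mul, map_sub]
  cases k with
  | zero => simp [mcSeries]
  | succ k =>
    rw [PowerSeries.coeff_succ_X_mul]
    simp [mcSeries, Nat.multichoose_succ_succ]

theorem allow_le {d a b m : ℕ} (ha : 0 < a) (hab : a < b) (hb : b ≤ d) (hm : m ≤ d) :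
    Allow d a b m ↔ m = a ∨ m = b := by
  unfold Allow
  rw [Nat.mod_eq_of_lt (by omega : a < d)]
  rcases hm.lt_or_eq with h | rfl <;> rcases hb.lt_or_eq with h' | rfl
  · rw [Nat.mod_eq_of_lt h, Nat.mod_eq_of_lt h']; omega
  · rw [Nat.mod_eq_of_lt h, Nat.mod_self]; omega
  · rw [Nat.mod_self, Nat.mod_eq_of_lt h']; omega
  · rw [Nat.mod_self]; omega

theorem allow_shift {d a b m : ℕ} (hm : 0 < m) : Allow d a b (d + m) ↔ Allow d a b m := by
  unfold Allow
  rw [Nat.add_mod_left]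
  constructor <;> rintro ⟨_, h⟩ <;> exact ⟨by omega, h⟩

theorem card_a {d a b : ℕ} (ha : 0 < a) (hab : a < b) (hb : b ≤ d) :
    (allowUpTo d a b a).card = 1 := by
  rw [Finset.card_eq_one]
  refine ⟨a, ?_⟩
  ext x
  simp only [allowUpTo, Finset.mem_filter, Finset.mem_range, Finset.mem_singleton]
  constructor
  · rintro ⟨h, h'⟩
    rw [allow_le ha hab hb (by omega)] at h'; omega
  · rintro rfl
    exact ⟨by omega, (allow_le ha hab hb (by omega)).2 (Or.inl rfl)⟩

theorem card_b {d a b m : ℕ} (ha : 0 < a) (hab : a < b) (hb : b ≤ m) (hm : m ≤ d) :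
    (allowUpTo d a b m).card = 2 := by
  rw [Finset.card_eq_two]
  refine ⟨a, b, hab.ne, ?_⟩
  ext x
  simp only [allowUpTo, Finset.mem_filter, Finset.mem_range, Finset.mem_singleton,
    Finset.mem_insert]
  constructor
  · rintro ⟨h, h'⟩
    rwa [allow_le ha hab (hb.trans hm) (by omega)] at h'
  · intro h
    exact ⟨by omega, (allow_le ha hab (hb.trans hm) (by omega)).2 h⟩

theorem allowUpTo_succ (d a b m : ℕ) : (allowUpTo d a b (m + 1)).card =
    (allowUpTo d a b m).card + if Allow d a b (m + 1) then 1 else 0 := by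
  unfold allowUpTo
  rw [Finset.range_add_one, Finset.filter_insert]
  split_ifs
  · rw [Finset.card_insert_of_notMem (by simp)]
  · rfl

theorem card_shift {d a b : ℕ} (ha : 0 < a) (hab : a < b) (hb : b ≤ d) (m : ℕ) :
    (allowUpTo d a b (d + m)).card = (allowUpTo d a b m).card + 2 := by
  induction m with
  | zero =>
    rw [Nat.add_zero, card_b ha hab hb le_rfl]
    have : allowUpTo d a b 0 = ∅ := by
      ext x; simp [allowUpTo, Allow]; omega
    rw [this]; rfl
  | succ m ih =>
    rw [← Nat.add_assoc, allowUpTo_succ, ih, allowUpTo_succ]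
    have h := allow_shift (d := d) (a := a) (b := b) (m := m + 1) (Nat.succ_pos m)
    simp only [Nat.add_assoc d m 1, h]
    omega

/-- contribution of largest part `m` -/
noncomputable def term12 (d a b m : ℕ) : PowerSeries ℤ :=
  if Allow d a b m then PowerSeries.X ^ m * mcSeries (allowUpTo d a b m).card else 0

theorem term12_shift {d a b : ℕ} (ha : 0 < a) (hab : a < b) (hb : b ≤ d) (m : ℕ) (hm : 0 < m) :
    (1 - PowerSeries.X) ^ 2 * term12 d a b (d + m) = PowerSeries.X ^ d * term12 d a b m := by
  unfold term12
  simp only [allow_shift hm, card_shift ha hab hb]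
  split_ifs
  · rw [← mcSeries_succ (allowUpTo d a b m).card, ← mcSeries_succ ((allowUpTo d a b m).card + 1)]
    ring
  · simp

theorem sum_first {d a b : ℕ} (ha : 0 < a) (hab : a < b) (hb : b ≤ d) :
    (1 - PowerSeries.X) ^ 2 * ∑ m ∈ Finset.range (d + 1), term12 d a b m =
      PowerSeries.X ^ a - PowerSeries.X ^ (a + 1) + PowerSeries.X ^ b := by
  have hf : (Finset.range (d + 1)).filter (Allow d a b) = {a, b} := by
    ext x
    simp only [Finset.mem_filter, Finset.mem_range, Finset.mem_singleton, Finset.mem_insert]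
    constructor
    · rintro ⟨h, h'⟩
      rwa [allow_le ha hab hb (by omega)] at h'
    · intro h
      exact ⟨by omega, (allow_le ha hab hb (by omega)).2 h⟩
  unfold term12
  rw [← Finset.sum_filter, hf, Finset.sum_pair hab.ne, card_a ha hab hb, card_b ha hab le_rfl hb]
  have h1 : (1 - PowerSeries.X) * mcSeries 1 = 1 := by rw [mcSeries_succ 0, mcSeries_zero]
  have h2 : (1 - PowerSeries.X) * mcSeries 2 = mcSeries 1 := mcSeries_succ 1
  linear_combination ((1 - PowerSeries.X) * PowerSeries.X ^ a + PowerSeries.X ^ b) * h1 +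
    (1 - PowerSeries.X) * PowerSeries.X ^ b * h2

theorem sum_rec {d a b : ℕ} (ha : 0 < a) (hab : a < b) (hb : b ≤ d) (N : ℕ) :
    (1 - PowerSeries.X) ^ 2 * ∑ m ∈ Finset.range (d + 1 + N), term12 d a b m =
      PowerSeries.X ^ a - PowerSeries.X ^ (a + 1) + PowerSeries.X ^ b +
      PowerSeries.X ^ d * ∑ m ∈ Finset.range (N + 1), term12 d a b m := by
  rw [Finset.sum_range_add, mul_add, sum_first ha hab hb, Finset.sum_range_succ']
  have h0 : term12 d a b 0 = 0 := by simp [term12, Allow]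
  rw [h0, add_zero, Finset.mul_sum, Finset.mul_sum]
  congr 1
  refine Finset.sum_congr rfl fun i _ => ?_
  rw [← term12_shift ha hab hb (i + 1) (Nat.succ_pos i)]
  congr 2
  omega

theorem dvd_diff (d a b N : ℕ) : (PowerSeries.X : PowerSeries ℤ) ^ N ∣
    PowerSeries.mk (fun n => if n = 0 then 0 else (ellP d a b n : ℤ)) -
      ∑ m ∈ Finset.range N, term12 d a b m := by
  rw [PowerSeries.X_pow_dvd_iff]
  intro n hn
  rw [map_sub, sub_eq_zero, map_sum, PowerSeries.coeff_mk]
  have h1 : (if n = 0 then 0 else (ellP d a b n : ℤ)) = (ellP d a b n : ℤ) := by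
    split_ifs with h
    · subst h; rw [ellP_eq]; rw [Finset.sum_range_one, if_neg (fun h => absurd h.1 (lt_irrefl 0))]; rfl
    · rfl
  have h2 : ∀ m, PowerSeries.coeff n (term12 d a b m) = if m ≤ n then
      ((if Allow d a b m then Nat.multichoose (allowUpTo d a b m).card (n - m) else 0 : ℕ) : ℤ)
      else 0 := by
    intro m
    unfold term12
    split_ifs <;> simp_all [PowerSeries.coeff_X_pow_mul', mcSeries]
  rw [h1, ellP_eq, Nat.cast_sum]
  rw [Finset.sum_congr rfl fun m _ => h2 m, ← Finset.sum_filter]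
  refine Finset.sum_congr ?_ fun _ _ => rfl
  ext x
  simp only [Finset.mem_filter, Finset.mem_range]
  omega

theorem stmt_12 (d a b : ℕ) (ha : 0 < a) (hab : a < b) (hb : b ≤ d) :
    ((1 : PowerSeries ℤ) - 2 * PowerSeries.X + PowerSeries.X ^ 2 - PowerSeries.X ^ d) *
        PowerSeries.mk (fun n => if n = 0 then 0 else (ellP d a b n : ℤ)) =
      PowerSeries.X ^ a - PowerSeries.X ^ (a + 1) + PowerSeries.X ^ b := by
  rw [← sub_eq_zero]
  ext n
  have h1 := dvd_diff d a b (d + 1 + n)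
  have h2 := dvd_diff d a b (n + 1)
  have h3 := sum_rec ha hab hb n
  generalize PowerSeries.mk (fun n => if n = 0 then 0 else (ellP d a b n : ℤ)) = L at *
  have h4 := (pow_dvd_pow (PowerSeries.X : PowerSeries ℤ)
    (show n + 1 ≤ d + 1 + n by omega)).trans h1
  have h5 := dvd_sub (h4.mul_left ((1 - PowerSeries.X) ^ 2)) (h2.mul_left (PowerSeries.X ^ d))
  have h6 := PowerSeries.X_pow_dvd_iff.1 h5 n (Nat.lt_succ_self n)
  rw [_root_.map_zero, ← h6]
  congr 1
  linear_combination h3
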